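/- Let G be the convex polyhedral cone in R^m given as the intersection of half spaces G_i = {x in R^m : <x, n_i> >= 0}, i = 1,...,N, where each n_i is a unit vector, and let F_i = {x in the boundary of G : <x, n_i> = 0}. With each face F_i associate a unit vector d_i with <d_i, n_i> > 0. Suppose that for every x in the boundary of G there exists a unit inward normal n in n(x) such that <d, n> > 0 for all d in d(x). Then there exists a function g : R^m -> R that is twice continuously differentiable, bounded, with bounded first and second derivatives, such that <grad g(x), d_i> >= 1 for every x in F_i and every i in {1,...,N}. -/

import Mathlib

open scoped RealInnerProductSpace

/-!
For every finite set `K` of constraints there is a linear functional `r K`, nonnegative on the cone,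
whose zeros in the cone are exactly the points of the face cut out by `K`, and with `1 ≤ r K (d i)`
for `i ∈ K`: take the inward normal provided by the hypothesis at a point of the relative interior
of that face, multiply it by a large constant and add the normals indexed by `K`. By Farkas' lemma
there is one constant `D` with `2 * r (insert i K) ≤ D * r K` on the part of the cone where `n i`
vanishes.

Let `φ` be a primitive of a bump function equal to `1` on `[0, 1]` and to `0` on `[2, ∞)`. For large
`lam`, the function `g = ∑ K, (lam * D) ^ #K * φ (D ^ (-#K) * r K)` works: its derivative along
`d i` is `∑ K, lam ^ #K * (w K * r K (d i))` with `w K = φ' (D ^ (-#K) * r K)`, and only the terms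
with `i ∉ K` can be negative. By the choice of `D`, if such a term is nonzero at a point of the
`i`-th face then `w (insert i K) = 1`, and the term of `insert i K` outweighs it by a factor of
order `lam`.
-/

section Farkas

variable {𝕜 V ι : Type*} [Field 𝕜] [LinearOrder 𝕜] [IsStrictOrderedRing 𝕜] [AddCommGroup V]
  [Module 𝕜 V]

theorem mem_hull_image_of_forall_nonneg (f : ι → Module.Dual 𝕜 V) (s : Finset ι)
    {v : Module.Dual 𝕜 V} (h : ∀ y, (∀ i ∈ s, 0 ≤ f i y) → 0 ≤ v y) :
    v ∈ PointedCone.hull 𝕜 (f '' s) := by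
  induction s using Finset.cons_induction generalizing f v with
  | empty =>
    have hv : v = 0 := LinearMap.ext fun y =>
      le_antisymm (by simpa using h (-y) (by simp)) (h y (by simp))
    exact hv ▸ zero_mem _
  | cons j s hj ih =>
    rw [Finset.coe_cons, Set.image_insert_eq]
    by_cases hs : ∀ y, (∀ i ∈ s, 0 ≤ f i y) → 0 ≤ v y
    · exact Submodule.span_mono (Set.subset_insert _ _) (ih f hs)
    push Not at hs
    obtain ⟨z, hz, hvz⟩ := hs
    have hjz : f j z < 0 := by
      by_contra! hjz
      exact hvz.not_ge (h z (by simpa [hjz] using hz))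
    have hf_mem {c : 𝕜} (hc : 0 ≤ c) : c • f j ∈ PointedCone.hull 𝕜 (insert (f j) (f '' s)) :=
      PointedCone.smul_mem _ hc (PointedCone.subset_hull (Set.mem_insert _ _))
    -- Projecting along `z` onto the kernel of `f j` eliminates the constraint `j`.
    let proj (w : Module.Dual 𝕜 V) : Module.Dual 𝕜 V := w - (w z / f j z) • f j
    have proj_apply (w : Module.Dual 𝕜 V) (y : V) : proj w y = w (y - (f j y / f j z) • z) := by
      simp only [proj, LinearMap.sub_apply, LinearMap.smul_apply, map_sub, map_smul, smul_eq_mul]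
      ring
    have hproj : proj v ∈ PointedCone.hull 𝕜 ((fun i => proj (f i)) '' s) := by
      refine ih _ fun y hy => ?_
      rw [proj_apply]
      refine h _ (Finset.forall_mem_cons hj _ |>.2 ⟨?_, fun i hi => proj_apply (f i) y ▸ hy i hi⟩)
      simp [hjz.ne]
    have hle : PointedCone.hull 𝕜 ((fun i => proj (f i)) '' s) ≤
        PointedCone.hull 𝕜 (insert (f j) (f '' s)) := by
      refine Submodule.span_le.2 (Set.image_subset_iff.2 fun i hi => ?_)
      have hproj_eq : proj (f i) = f i + (f i z / -f j z) • f j := by module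
      rw [Set.mem_preimage, SetLike.mem_coe, hproj_eq]
      exact add_mem (PointedCone.subset_hull (Set.mem_insert_of_mem _ (Set.mem_image_of_mem f hi)))
        (hf_mem (div_nonneg (hz i hi) (neg_nonneg.2 hjz.le)))
    simpa [proj] using add_mem (hle hproj) (hf_mem (div_pos_of_neg_of_neg hvz hjz).le)

end Farkas

section HasBoundedDerivs

open scoped ContDiff

variable {E F H ι : Type*} [NormedAddCommGroup E] [NormedSpace ℝ E] [NormedAddCommGroup F]
  [NormedSpace ℝ F] [NormedAddCommGroup H] [NormedSpace ℝ H]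

/-- The function `g` is smooth and each of its iterated derivatives, including `g` itself as the
zeroth one, is bounded on the whole space. -/
structure HasBoundedDerivs (g : E → F) : Prop where
  contDiff : ContDiff ℝ ∞ g
  exists_bound : ∀ k : ℕ, ∃ C, ∀ x, ‖iteratedFDeriv ℝ k g x‖ ≤ C

namespace HasBoundedDerivs

theorem sum {g : ι → E → F} {s : Finset ι} (hg : ∀ i ∈ s, HasBoundedDerivs (g i)) :
    HasBoundedDerivs fun x => ∑ i ∈ s, g i x := by
  refine ⟨ContDiff.sum fun i hi => (hg i hi).contDiff, fun k => ?_⟩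
  choose! C hC using fun i hi => (hg i hi).exists_bound k
  refine ⟨∑ i ∈ s, C i, fun x => ?_⟩
  rw [iteratedFDeriv_fun_sum_apply fun i hi =>
    ((hg i hi).contDiff.of_le (mod_cast le_top)).contDiffAt]
  exact norm_sum_le_of_le s fun i hi => hC i hi x

theorem const_smul {g : E → F} (hg : HasBoundedDerivs g) (a : ℝ) :
    HasBoundedDerivs fun x => a • g x := by
  refine ⟨hg.contDiff.const_smul a, fun k => ?_⟩
  obtain ⟨C, hC⟩ := hg.exists_bound k
  refine ⟨‖a‖ * C, fun x => ?_⟩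
  rw [iteratedFDeriv_const_smul_apply' (hg.contDiff.of_le (mod_cast le_top)).contDiffAt, norm_smul]
  gcongr
  exact hC x

theorem comp_continuousLinearMap {g : F → H} (hg : HasBoundedDerivs g) (L : E →L[ℝ] F) :
    HasBoundedDerivs fun x => g (L x) := by
  refine ⟨hg.contDiff.comp L.contDiff, fun k => ?_⟩
  obtain ⟨C, hC⟩ := hg.exists_bound k
  refine ⟨C * ‖L‖ ^ k, fun x => ?_⟩
  calc ‖iteratedFDeriv ℝ k (g ∘ L) x‖
    _ ≤ ‖iteratedFDeriv ℝ k g (L x)‖ * ‖L‖ ^ k := by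
      rw [L.iteratedFDeriv_comp_right hg.contDiff x (mod_cast le_top)]
      simpa using (iteratedFDeriv ℝ k g (L x)).norm_compContinuousLinearMap_le fun _ => L
    _ ≤ C * ‖L‖ ^ k := by gcongr; exact hC _

theorem exists_norm_fderiv_le {g : E → F} (hg : HasBoundedDerivs g) :
    ∃ C, ∀ x, ‖g x‖ ≤ C ∧ ‖fderiv ℝ g x‖ ≤ C ∧ ‖fderiv ℝ (fderiv ℝ g) x‖ ≤ C := by
  choose C hC using hg.exists_bound
  refine ⟨max (C 0) (max (C 1) (C 2)), fun x => ⟨?_, ?_, ?_⟩⟩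
  · exact le_max_of_le_left (norm_iteratedFDeriv_zero (𝕜 := ℝ) (f := g) ▸ hC 0 x)
  · exact le_max_of_le_right (le_max_of_le_left (norm_iteratedFDeriv_one (𝕜 := ℝ) g ▸ hC 1 x))
  · refine le_max_of_le_right (le_max_of_le_right ?_)
    rw [← norm_iteratedFDeriv_one, norm_iteratedFDeriv_fderiv]
    exact hC 2 x

end HasBoundedDerivs

theorem hasBoundedDerivs_integral [CompleteSpace F] {b : ℝ → F} (hb : ContDiff ℝ ∞ b)
    (hsupp : HasCompactSupport b) : HasBoundedDerivs fun s => ∫ t in (0 : ℝ)..s, b t := by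
  have hderiv (s : ℝ) : HasDerivAt (fun s => ∫ t in (0 : ℝ)..s, b t) (b s) s :=
    hb.continuous.integral_hasStrictDerivAt 0 s |>.hasDerivAt
  have hderiv_eq : deriv (fun s => ∫ t in (0 : ℝ)..s, b t) = b := funext fun s => (hderiv s).deriv
  refine ⟨contDiff_infty_iff_deriv.2 ⟨fun s => (hderiv s).differentiableAt, by rwa [hderiv_eq]⟩, ?_⟩
  rintro (_ | k)
  · refine ⟨∫ t, ‖b t‖, fun s => ?_⟩
    rw [norm_iteratedFDeriv_zero]
    exact intervalIntegral.norm_integral_le_integral_norm_uIoc.trans <|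
      MeasureTheory.setIntegral_le_integral
        (hb.continuous.integrable_of_hasCompactSupport hsupp).norm
        (.of_forall fun _ => norm_nonneg _)
  · simp only [norm_iteratedFDeriv_eq_norm_iteratedDeriv, iteratedDeriv_succ', hderiv_eq]
    simp only [← norm_iteratedFDeriv_eq_norm_iteratedDeriv]
    exact (hsupp.iteratedFDeriv k).exists_bound_of_continuous
      (hb.continuous_iteratedFDeriv (mod_cast le_top))

theorem exists_hasBoundedDerivs_deriv_eq_one : ∃ φ : ℝ → ℝ, HasBoundedDerivs φ ∧
    (∀ s, deriv φ s ∈ Set.Icc 0 1) ∧ (∀ s ∈ Set.Icc 0 1, deriv φ s = 1) ∧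
    ∀ s, 2 ≤ s → deriv φ s = 0 := by
  let b : ContDiffBump (0 : ℝ) := ⟨1, 2, by norm_num, by norm_num⟩
  have hderiv : deriv (fun s => ∫ t in (0 : ℝ)..s, b t) = b :=
    funext fun s => b.continuous.deriv_integral _ 0 s
  refine ⟨_, hasBoundedDerivs_integral b.contDiff b.hasCompactSupport, ?_, ?_, ?_⟩ <;> rw [hderiv]
  · exact fun s => ⟨b.nonneg, b.le_one⟩
  · exact fun s hs => b.one_of_mem_closedBall <| by
      simpa [b, Real.closedBall_eq_Icc] using ⟨by linarith [hs.1], hs.2⟩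
  · exact fun s hs => b.zero_of_le_dist <| by simpa [b] using hs.trans (le_abs_self s)

end HasBoundedDerivs

section PolyhedralCone

variable {E ι : Type*} [NormedAddCommGroup E] [NormedSpace ℝ E]

/-- The polyhedral cone with inward normals `n i`, given as functionals so that no inner product is
needed. -/
def polyhedralCone (n : ι → StrongDual ℝ E) : Set E := {x | ∀ i, 0 ≤ n i x}

/-- The `i`-th face `F i` of the polyhedral cone: the boundary points at which the constraint
`n i` is active. -/
def polyhedralFace (n : ι → StrongDual ℝ E) (i : ι) : Set E :=
  {x ∈ frontier (polyhedralCone n) | n i x = 0}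

/-- The completely-S condition on the reflection data: every boundary point `x` of the cone has an
inward normal `r`, encoded as a functional which attains its minimum over the cone at `x`, that is
positive on the cone spanned by the reflection directions `d i` active at `x`. Positivity is asked
only on these generators. -/
def CompletelyS (n : ι → StrongDual ℝ E) (d : ι → E) : Prop :=
  ∀ x ∈ frontier (polyhedralCone n), ∃ r : StrongDual ℝ E,
    (∀ y ∈ polyhedralCone n, r x ≤ r y) ∧ ∀ i, n i x = 0 → 0 < r (d i)

/-- The functional `r` supports the cone exactly along the face on which all constraints in `K` are
active, and grows at least at unit rate along the reflection directions of `K`. -/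
structure IsFaceFunctional (n : ι → StrongDual ℝ E) (d : ι → E) (K : Finset ι)
    (r : StrongDual ℝ E) : Prop where
  nonneg : ∀ y ∈ polyhedralCone n, 0 ≤ r y
  eq_zero_iff : ∀ y ∈ polyhedralCone n, r y = 0 ↔ ∀ i ∈ K, n i y = 0
  one_le : ∀ i ∈ K, 1 ≤ r (d i)

variable {n : ι → StrongDual ℝ E} {d : ι → E}

theorem isClosed_polyhedralCone : IsClosed (polyhedralCone n) := by
  simp only [polyhedralCone, Set.ofPred_forall]
  exact isClosed_iInter fun i => isClosed_le continuous_const (n i).continuous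

theorem zero_mem_polyhedralCone : 0 ∈ polyhedralCone n := fun i => (map_zero (n i)).ge

theorem add_mem_polyhedralCone {x y : E} (hx : x ∈ polyhedralCone n) (hy : y ∈ polyhedralCone n) :
    x + y ∈ polyhedralCone n := fun i => by
  rw [map_add]
  exact add_nonneg (hx i) (hy i)

theorem polyhedralFace_subset (i : ι) : polyhedralFace n i ⊆ polyhedralCone n :=
  fun _ hx => isClosed_polyhedralCone.frontier_subset hx.1

theorem mem_frontier_polyhedralCone {x : E} {i : ι} (hni : n i ≠ 0) (hx : x ∈ polyhedralCone n)
    (hxi : n i x = 0) : x ∈ frontier (polyhedralCone n) := by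
  refine ⟨subset_closure hx, fun hint => hni ?_⟩
  have hmin : IsLocalMin (n i) x := by
    filter_upwards [mem_interior_iff_mem_nhds.1 hint] with y hy using hxi.trans_le (hy i)
  simpa using hmin.fderiv_eq_zero

theorem CompletelyS.exists_nonneg (hS : CompletelyS n d) (hn : ∀ i, n i ≠ 0) {x : E}
    (hx : x ∈ polyhedralCone n) (hxn : ∃ i, n i x = 0) :
    ∃ r : StrongDual ℝ E, (∀ y ∈ polyhedralCone n, 0 ≤ r y) ∧ r x = 0 ∧
      ∀ i, n i x = 0 → 0 < r (d i) := by
  obtain ⟨i, hi⟩ := hxn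
  obtain ⟨r, hr, hrd⟩ := hS x (mem_frontier_polyhedralCone (hn i) hx hi)
  have hx0 : r x ≤ 0 := by simpa using hr 0 zero_mem_polyhedralCone
  have hx2 : r x ≤ r x + r x := by simpa using hr (x + x) (add_mem_polyhedralCone hx hx)
  have hrx : r x = 0 := by linarith
  exact ⟨r, fun y hy => hrx ▸ hr y hy, hrx, hrd⟩

section Finite

variable [Finite ι]

theorem exists_relInterior_polyhedralCone (n : ι → StrongDual ℝ E) (K : Finset ι) :
    ∃ x ∈ polyhedralCone n, (∀ i ∈ K, n i x = 0) ∧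
      ∀ y ∈ polyhedralCone n, (∀ i ∈ K, n i y = 0) → ∀ j, n j x = 0 → n j y = 0 := by
  obtain ⟨x, ⟨hx, hxK⟩, hmin⟩ := exists_minimalFor_of_wellFoundedLT
    (fun x => x ∈ polyhedralCone n ∧ ∀ i ∈ K, n i x = 0) (fun x => {j | n j x = 0})
    ⟨0, zero_mem_polyhedralCone, fun i _ => map_zero (n i)⟩
  refine ⟨x, hx, hxK, fun y hy hyK j hj => ?_⟩
  have hactive : {j | n j (x + y) = 0} ⊆ {j | n j x = 0} := fun j (hj : n j (x + y) = 0) => by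
    rw [map_add] at hj
    exact ((add_eq_zero_iff_of_nonneg (hx j) (hy j)).1 hj).1
  have hxy : n j (x + y) = 0 :=
    hmin ⟨add_mem_polyhedralCone hx hy, fun i hi => by rw [map_add, hxK i hi, hyK i hi, add_zero]⟩
      hactive hj
  simpa [hj] using hxy

theorem exists_smul_sub_mem_polyhedralCone {x y : E} (hx : x ∈ polyhedralCone n)
    (hxy : ∀ j, n j x = 0 → n j y = 0) : ∃ M : ℝ, M • x - y ∈ polyhedralCone n := by
  refine (Filter.eventually_all.2 fun j => ?_ :
    ∀ᶠ M : ℝ in Filter.atTop, ∀ j, 0 ≤ n j (M • x - y)).exists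
  simp only [map_sub, map_smul, smul_eq_mul, sub_nonneg]
  rcases (hx j).eq_or_lt with hj | hj
  · simp [← hj, hxy j hj.symm]
  · exact (Filter.tendsto_id.atTop_mul_const hj).eventually_ge_atTop _

theorem exists_le_mul_of_forall_nonpos {u v : StrongDual ℝ E}
    (h : ∀ y ∈ polyhedralCone n, u y ≤ 0 → v y ≤ 0) :
    ∃ C : ℝ, ∀ y ∈ polyhedralCone n, v y ≤ C * u y := by
  have := Fintype.ofFinite ι
  have hv : -(v : Module.Dual ℝ E) ∈ PointedCone.hull ℝ
      (insert (-(u : Module.Dual ℝ E)) (Set.range fun i => (n i : Module.Dual ℝ E))) := by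
    have := mem_hull_image_of_forall_nonneg (v := -(v : Module.Dual ℝ E))
      (fun i : Option ι => i.elim (-(u : Module.Dual ℝ E)) fun i => n i) Finset.univ fun y hy =>
        neg_nonneg.2 (h y (fun i => hy (some i) (Finset.mem_univ _))
          (neg_nonneg.1 (hy none (Finset.mem_univ _))))
    rwa [Finset.coe_univ, Set.image_univ, Option.range_eq] at this
  obtain ⟨C, w, hw, hvw⟩ := Submodule.mem_span_insert.1 hv
  refine ⟨C, fun y hy => ?_⟩
  have hwy : 0 ≤ w y := by
    have hle : PointedCone.hull ℝ (Set.range fun i => (n i : Module.Dual ℝ E)) ≤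
        PointedCone.dual (Module.Dual.eval ℝ E) {y} :=
      Submodule.span_le.2 (Set.range_subset_iff.2 fun i => by rintro _ rfl; exact hy i)
    exact hle hw rfl
  have hvy : -v y = C * -u y + w y := LinearMap.congr_fun hvw y
  linarith

theorem CompletelyS.exists_isFaceFunctional (hS : CompletelyS n d) (hn : ∀ i, n i ≠ 0)
    (K : Finset ι) : ∃ r, IsFaceFunctional n d K r := by
  rcases K.eq_empty_or_nonempty with rfl | ⟨i, hi⟩
  · exact ⟨0, by simp, by simp, by simp⟩
  obtain ⟨x, hx, hxK, hxmin⟩ := exists_relInterior_polyhedralCone n K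
  obtain ⟨r, hr, hrx, hrd⟩ := hS.exists_nonneg hn hx ⟨i, hxK i hi⟩
  have hrface (y) (hy : y ∈ polyhedralCone n) (hyK : ∀ i ∈ K, n i y = 0) : r y = 0 := by
    obtain ⟨M, hM⟩ := exists_smul_sub_mem_polyhedralCone hx (hxmin y hy hyK)
    refine le_antisymm ?_ (hr y hy)
    simpa [hrx] using hr _ hM
  have hlarge : ∀ᶠ M : ℝ in Filter.atTop, ∀ i ∈ K, 1 - ∑ j ∈ K, n j (d i) ≤ M * r (d i) :=
    (Filter.eventually_all_finset K).2 fun i hi =>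
      (Filter.tendsto_id.atTop_mul_const (hrd i (hxK i hi))).eventually_ge_atTop _
  obtain ⟨M, hM, hM0⟩ := (hlarge.and (Filter.eventually_gt_atTop 0)).exists
  have hsum (y) (hy : y ∈ polyhedralCone n) : 0 ≤ ∑ j ∈ K, n j y :=
    Finset.sum_nonneg fun j _ => hy j
  have happly (y : E) : (M • r + ∑ j ∈ K, n j) y = M * r y + ∑ j ∈ K, n j y := by simp
  refine ⟨M • r + ∑ j ∈ K, n j, fun y hy => ?_, fun y hy => ?_, fun i hi => ?_⟩
  · rw [happly]
    exact add_nonneg (mul_nonneg hM0.le (hr y hy)) (hsum y hy)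
  · rw [happly, add_eq_zero_iff_of_nonneg (mul_nonneg hM0.le (hr y hy)) (hsum y hy),
      Finset.sum_eq_zero_iff_of_nonneg fun j _ => hy j]
    exact ⟨And.right, fun h => ⟨by rw [hrface y hy h, mul_zero], h⟩⟩
  · rw [happly]
    exact sub_le_iff_le_add.1 (hM i hi)

theorem IsFaceFunctional.exists_two_mul_insert_le [DecidableEq ι] {r : Finset ι → StrongDual ℝ E}
    (hr : ∀ K, IsFaceFunctional n d K (r K)) :
    ∃ D > 0, ∀ K i, ∀ y ∈ polyhedralCone n, n i y = 0 → 2 * r (insert i K) y ≤ D * r K y := by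
  suffices ∀ᶠ D : ℝ in Filter.atTop, ∀ K i, ∀ y ∈ polyhedralCone n, n i y = 0 →
      2 * r (insert i K) y ≤ D * r K y from ((Filter.eventually_gt_atTop 0).and this).exists
  refine Filter.eventually_all.2 fun K => Filter.eventually_all.2 fun i => ?_
  obtain ⟨C, hC⟩ := exists_le_mul_of_forall_nonpos (n := n) (u := r K + n i)
    (v := r (insert i K)) fun y hy hu => by
      have hzero := (add_eq_zero_iff_of_nonneg ((hr K).nonneg y hy) (hy i)).1
        (le_antisymm hu (add_nonneg ((hr K).nonneg y hy) (hy i)))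
      refine (((hr _).eq_zero_iff y hy).2 ?_).le
      exact (Finset.forall_mem_insert _ _ _).2 ⟨hzero.2, ((hr K).eq_zero_iff y hy).1 hzero.1⟩
  filter_upwards [Filter.eventually_ge_atTop (2 * C)] with D hD y hy hyi
  calc 2 * r (insert i K) y
    _ ≤ 2 * (C * r K y) := by gcongr; simpa [hyi] using hC y hy
    _ = 2 * C * r K y := by ring
    _ ≤ D * r K y := by gcongr; exact (hr K).nonneg y hy

end Finite

end PolyhedralCone

theorem one_le_sum_pow_card_mul_mul {ι : Type*} [Fintype ι] [DecidableEq ι] (i : ι)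
    {w a : Finset ι → ℝ} {B : ℝ} (hB : 0 ≤ B) (hw : ∀ K, w K ∈ Set.Icc 0 1)
    (hinsert : ∀ K, i ∉ K → w K ≠ 0 → w (insert i K) = 1) (hempty : w ∅ ≠ 0)
    (ha : ∀ K, i ∈ K → 1 ≤ a K) (haB : ∀ K, -B ≤ a K) :
    1 ≤ ∑ K, (1 + B) ^ K.card * (w K * a K) := by
  let term (K : Finset ι) : ℝ := (1 + B) ^ K.card * (w K * a K)
  have hlam (k : ℕ) : 0 < (1 + B) ^ k := by positivity
  have hpair_of_ne (K) (hi : i ∉ K) (hK : w K ≠ 0) :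
      (1 + B) ^ K.card ≤ term K + term (insert i K) := by
    have hterm : (1 + B) ^ K.card * -B ≤ term K := by
      have : -B ≤ w K * a K := by nlinarith [haB K, (hw K).1, (hw K).2]
      exact mul_le_mul_of_nonneg_left this (hlam _).le
    have hterm_insert : (1 + B) ^ (K.card + 1) ≤ term (insert i K) := by
      simp only [term, hinsert K hi hK, Finset.card_insert_of_notMem hi, one_mul]
      exact le_mul_of_one_le_right (hlam _).le (ha _ (Finset.mem_insert_self i K))
    linear_combination hterm + hterm_insert
  have hpair_nonneg (K) (hi : i ∉ K) : 0 ≤ term K + term (insert i K) := by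
    by_cases hK : w K = 0
    · have := mul_nonneg (hw (insert i K)).1 (zero_le_one.trans (ha _ (Finset.mem_insert_self i K)))
      simpa [term, hK] using mul_nonneg (hlam _).le this
    · exact (hlam _).le.trans (hpair_of_ne K hi hK)
  have hsum : ∑ K, term K =
      ∑ K ∈ (Finset.univ.erase i).powerset, (term K + term (insert i K)) := by
    rw [Finset.sum_add_distrib, ← Finset.sum_powerset_insert (Finset.notMem_erase i _),
      Finset.insert_erase (Finset.mem_univ i), Finset.powerset_univ]
  calc (1 : ℝ)
    _ ≤ term ∅ + term (insert i ∅) := by simpa using hpair_of_ne ∅ (by simp) hempty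
    _ ≤ ∑ K ∈ (Finset.univ.erase i).powerset, (term K + term (insert i K)) :=
      Finset.single_le_sum (f := fun K => term K + term (insert i K))
        (fun K hK => hpair_nonneg K fun hi => Finset.notMem_erase i _ (Finset.mem_powerset.1 hK hi))
        (Finset.empty_mem_powerset _)
    _ = ∑ K, term K := hsum.symm

section LayeredSum

variable {E ι : Type*} [NormedAddCommGroup E] [NormedSpace ℝ E] [Fintype ι]

/-- The superposition of the profiles `φ ∘ r K` of all faces. The scale `D ^ #K` makes the layer of
`K` lie, on the `i`-th face, inside the plateau of the layer of `insert i K`, and `lam ^ #K` is the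
weight of `K` in the derivative, see `fderiv_layeredSum_apply`. -/
noncomputable def layeredSum (φ : ℝ → ℝ) (r : Finset ι → StrongDual ℝ E) (lam D : ℝ) (x : E) : ℝ :=
  ∑ K, (lam * D) ^ K.card * φ ((D ^ K.card)⁻¹ * r K x)

variable {φ : ℝ → ℝ} {r : Finset ι → StrongDual ℝ E} {lam D : ℝ}

theorem HasBoundedDerivs.layeredSum (hφ : HasBoundedDerivs φ) :
    HasBoundedDerivs (layeredSum φ r lam D) :=
  .sum fun K _ => (hφ.comp_continuousLinearMap ((D ^ K.card)⁻¹ • r K)).const_smul _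

theorem fderiv_layeredSum_apply (hφ : Differentiable ℝ φ) (hD : D ≠ 0) (x v : E) :
    fderiv ℝ (layeredSum φ r lam D) x v =
      ∑ K, lam ^ K.card * (deriv φ ((D ^ K.card)⁻¹ * r K x) * r K v) := by
  have hterm (K : Finset ι) : HasFDerivAt
      (fun x => (lam * D) ^ K.card * φ ((D ^ K.card)⁻¹ * r K x))
      ((lam * D) ^ K.card • deriv φ ((D ^ K.card)⁻¹ * r K x) • (D ^ K.card)⁻¹ • r K) x :=
    ((hφ _).hasDerivAt.comp_hasFDerivAt x ((r K).hasFDerivAt.const_mul _)).const_mul _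
  have hsum : HasFDerivAt (layeredSum φ r lam D) _ x := .fun_sum fun K _ => hterm K
  rw [hsum.fderiv, sum_apply]
  refine Finset.sum_congr rfl fun K _ => ?_
  simp only [smul_apply, smul_eq_mul]
  rw [mul_pow]
  field_simp

end LayeredSum

section InnerProductSpace

variable {E ι : Type*} [NormedAddCommGroup E] [InnerProductSpace ℝ E]

theorem polyhedralCone_innerSL (n : ι → E) :
    polyhedralCone (fun i => innerSL ℝ (n i)) = ⋂ i, {x | 0 ≤ ⟪x, n i⟫} := by
  ext x
  simp only [polyhedralCone, Set.mem_ofPred_eq, Set.mem_iInter, innerSL_apply_apply,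
    real_inner_comm]

theorem completelyS_innerSL [Fintype ι] {n d : ι → E} (hd : ∀ i, ‖d i‖ = 1)
    (hS : ∀ x ∈ frontier (⋂ i, {x | 0 ≤ ⟪x, n i⟫}), ∃ r : E,
      (∀ y ∈ ⋂ i, {x | 0 ≤ ⟪x, n i⟫}, ⟪r, x - y⟫ ≤ 0) ∧
      ∀ v : E, (∃ α : ι → ℝ, (∀ i, 0 ≤ α i) ∧ (∀ i, ⟪x, n i⟫ ≠ 0 → α i = 0) ∧
        v = ∑ i, α i • d i) → ‖v‖ = 1 → 0 < ⟪v, r⟫) :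
    CompletelyS (fun i => innerSL ℝ (n i)) d := by
  classical
  rw [← polyhedralCone_innerSL] at hS
  intro x hx
  obtain ⟨r, hr, hrd⟩ := hS x hx
  refine ⟨innerSL ℝ r, fun y hy => ?_, fun i hi => ?_⟩
  · simpa only [innerSL_apply_apply, inner_sub_right, sub_nonpos] using hr y hy
  · have hsingle : (0 : ι → ℝ) ≤ Pi.single i 1 := Pi.single_nonneg.2 zero_le_one
    have hdi : 0 < ⟪d i, r⟫ := by
      refine hrd _ ⟨Pi.single i 1, hsingle, fun j hj => ?_, ?_⟩ (hd i)
      · refine Pi.single_eq_of_ne (fun hji => hj ?_) 1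
        rwa [hji, real_inner_comm]
      · simp [Pi.single_apply, ite_smul]
    rwa [innerSL_apply_apply, real_inner_comm]

end InnerProductSpace

theorem exists_C2_function_of_completelyS_general {E ι : Type*} [NormedAddCommGroup E]
    [NormedSpace ℝ E] [Finite ι] {n : ι → StrongDual ℝ E} {d : ι → E} (hn : ∀ i, n i ≠ 0)
    (hS : CompletelyS n d) :
    ∃ g : E → ℝ, HasBoundedDerivs g ∧ ∀ i, ∀ x ∈ polyhedralFace n i, 1 ≤ fderiv ℝ g x (d i) := by
  classical
  have := Fintype.ofFinite ι
  choose r hr using hS.exists_isFaceFunctional hn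
  obtain ⟨D, hD, hDr⟩ := IsFaceFunctional.exists_two_mul_insert_le hr
  obtain ⟨B, hB, hBr⟩ : ∃ B ≥ 0, ∀ K i, -B ≤ r K (d i) := by
    refine ((Filter.eventually_ge_atTop 0).and ?_).exists
    refine Filter.eventually_all.2 fun K => Filter.eventually_all.2 fun i => ?_
    simpa only [neg_le] using Filter.eventually_ge_atTop (-r K (d i))
  obtain ⟨φ, hφ, hφ_mem, hφ_one, hφ_zero⟩ := exists_hasBoundedDerivs_deriv_eq_one
  refine ⟨layeredSum φ r (1 + B) D, hφ.layeredSum, fun i x hx => ?_⟩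
  have hxG := polyhedralFace_subset i hx
  rw [fderiv_layeredSum_apply (hφ.contDiff.differentiable (by simp)) hD.ne']
  refine one_le_sum_pow_card_mul_mul i hB (fun K => hφ_mem _) (fun K hi hK => ?_) ?_
    (fun K hi => (hr K).one_le i hi) (fun K => hBr K i)
  · have hlt : (D ^ K.card)⁻¹ * r K x < 2 := not_le.1 (mt (hφ_zero _) hK)
    refine hφ_one _ ⟨mul_nonneg (by positivity) ((hr _).nonneg x hxG), ?_⟩
    rw [Finset.card_insert_of_notMem hi, inv_mul_le_one₀ (by positivity)]
    have hrK : r K x < D ^ K.card * 2 := (inv_mul_lt_iff₀ (by positivity)).1 hlt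
    have hinsert : 2 * r (insert i K) x ≤ 2 * D ^ (K.card + 1) :=
      calc 2 * r (insert i K) x
        _ ≤ D * r K x := hDr K i x hxG hx.2
        _ ≤ D * (D ^ K.card * 2) := by gcongr
        _ = 2 * D ^ (K.card + 1) := by ring
    exact le_of_mul_le_mul_left hinsert two_pos
  · simp [((hr ∅).eq_zero_iff x hxG).2, hφ_one]

/-- Lemma 1.3 of the paper. Let `G ⊆ ℝ^m` be the polyhedal cone
`G = ⋂ᵢ {x : ⟪x, nᵢ⟫ ≥ 0}` with unit normals `nᵢ`, faces `Fᵢ = {x ∈ ∂G : ⟪x, nᵢ⟫ = 0}` and unit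
reflection directions `dᵢ` with `⟪dᵢ, nᵢ⟫ > 0`.  If for every `x ∈ ∂G` there is a unit inward
normal `r ∈ n(x)` with `⟪d, r⟫ > 0` for every `d ∈ d(x)` (the completely-S condition), then there
is a `C²` function `g : ℝ^m → ℝ`, bounded with bounded first and second derivatives, such that
`⟪∇g(x), dᵢ⟫ ≥ 1` for every `x ∈ Fᵢ` and every `i`. -/
theorem exists_C2_function_of_completelyS
    (m N : ℕ) (hN : 1 ≤ N)
    (n d : Fin N → EuclideanSpace ℝ (Fin m))
    (hn : ∀ i, ‖n i‖ = 1) (hd : ∀ i, ‖d i‖ = 1)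
    (hdn : ∀ i, 0 < ⟪d i, n i⟫)
    (G : Set (EuclideanSpace ℝ (Fin m)))
    (hG : G = ⋂ i, {x | 0 ≤ ⟪x, n i⟫})
    (F : Fin N → Set (EuclideanSpace ℝ (Fin m)))
    (hF : ∀ i, F i = {x ∈ frontier G | ⟪x, n i⟫ = 0})
    (hS : ∀ x ∈ frontier G, ∃ r : EuclideanSpace ℝ (Fin m), ‖r‖ = 1 ∧
      (∀ y ∈ G, ⟪r, x - y⟫ ≤ 0) ∧
      (∀ v : EuclideanSpace ℝ (Fin m),
        (∃ α : Fin N → ℝ, (∀ i, 0 ≤ α i) ∧ (∀ i, ⟪x, n i⟫ ≠ 0 → α i = 0) ∧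
          v = ∑ i, α i • d i) → ‖v‖ = 1 → 0 < ⟪v, r⟫)) :
    ∃ g : EuclideanSpace ℝ (Fin m) → ℝ, ContDiff ℝ 2 g ∧
      (∃ C : ℝ, ∀ x, |g x| ≤ C ∧ ‖fderiv ℝ g x‖ ≤ C ∧ ‖fderiv ℝ (fderiv ℝ g) x‖ ≤ C) ∧
      (∀ i : Fin N, ∀ x ∈ F i, 1 ≤ ⟪gradient g x, d i⟫) := by
  obtain rfl : G = polyhedralCone fun i => innerSL ℝ (n i) :=
    hG.trans (polyhedralCone_innerSL n).symm
  have hS' : CompletelyS (fun i => innerSL ℝ (n i)) d := completelyS_innerSL hd fun x hx =>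
    (hS x (polyhedralCone_innerSL n ▸ hx)).imp fun r hr => polyhedralCone_innerSL n ▸ hr.2
  have hn0 (i : Fin N) : innerSL ℝ (n i) ≠ 0 := by
    rw [← norm_ne_zero_iff, innerSL_apply_norm, hn i]
    exact one_ne_zero
  obtain ⟨g, hg, hgd⟩ := exists_C2_function_of_completelyS_general hn0 hS'
  refine ⟨g, contDiff_infty.1 hg.contDiff 2, hg.exists_norm_fderiv_le, fun i x hx => ?_⟩
  rw [hF] at hx
  rw [inner_gradient_left]
  exact hgd i x ⟨hx.1, by rw [innerSL_apply_apply, real_inner_comm, hx.2]⟩
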